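/- arXiv:1610.09879 — 2 statements merged into one kernel-verified Lean document; each statement's English description precedes it below -/
import Mathlib

section
/- If Y_j is a spherical harmonic of degree j on S^{n-1} and its homogeneous extension Q_j is the corresponding solid harmonic, then for every multi-index α with |α| ≤ j one has ‖∂^α Q_j‖_{L^2(S^{n-1})}^2 ≤ 2^{|α|} · j^{2|α|} · e^{n/2−1} · ‖Q_j‖_{L^2(S^{n-1})}^2. -/
open MeasureTheory MvPolynomial

/-- The iterated partial derivative `∂^α` of multi-index `α` acting on polynomials. -/
noncomputable def pderivMulti (n : ℕ) (α : Fin n → ℕ) :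
    MvPolynomial (Fin n) ℝ →ₗ[ℝ] MvPolynomial (Fin n) ℝ :=
  ((List.finRange n).map fun i => ((MvPolynomial.pderiv (R := ℝ) i).toLinearMap ^ (α i))).prod

/-- The surface measure on the unit sphere `S^{n-1} ⊆ ℝ^n`. -/
noncomputable def sphereMeas (n : ℕ) :
    Measure (Metric.sphere (0 : EuclideanSpace ℝ (Fin n)) 1) :=
  (volume : Measure (EuclideanSpace ℝ (Fin n))).toSphere

/-!
For a solid harmonic `P` of degree `k`, integrate `div (P ∇P) = |∇P|²` against `exp (-|x|²)`:
integration by parts and Euler's identity give `∑ᵢ ∫ (∂ᵢP)² exp (-|x|²) = 2k ∫ P² exp (-|x|²)`.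
In polar coordinates the Gaussian integral of a homogeneous polynomial is its integral over the
sphere times a value of the Gamma function, and `Γ(k + n/2) = (k - 1 + n/2) Γ(k - 1 + n/2)` turns
this into `∑ᵢ ‖∂ᵢP‖² = k (n + 2k - 2) ‖P‖²` on the sphere, which contains Seeley's inequality.

Derivatives of solid harmonics are solid harmonics, so iterating gives
`‖∂^α Q‖² ≤ ∏_{l < |α|} (j - l) (n + 2 (j - l) - 2) ‖Q‖²`. Each factor is at most
`j (n + 2j - 2) = 2j² (1 + (n/2 - 1) / j) ≤ 2j² exp ((n/2 - 1) / j)`, and since `|α| ≤ j` the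
exponentials multiply to at most `exp (n/2 - 1)`.
-/

section Polynomial

variable {σ R : Type*} [CommSemiring R]

theorem pderiv_pderiv_comm (i j : σ) (P : MvPolynomial σ R) :
    pderiv i (pderiv j P) = pderiv j (pderiv i P) := by
  classical
  ext m
  obtain rfl | hij := eq_or_ne i j
  · rfl
  · simp [coeff_pderiv, add_right_comm m, hij, hij.symm, mul_right_comm]

theorem eval_smul_of_isHomogeneous {P : MvPolynomial σ R} {d : ℕ} (hP : P.IsHomogeneous d)
    (r : R) (x : σ → R) : eval (r • x) P = r ^ d * eval x P := by
  simp only [eval_eq, Finset.mul_sum]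
  refine Finset.sum_congr rfl fun m hm => ?_
  have hd : ∑ i ∈ m.support, m i = d := (hP.degree_eq_sum_deg_support hm).symm
  simp only [Pi.smul_apply, smul_eq_mul, mul_pow, Finset.prod_mul_distrib,
    Finset.prod_pow_eq_pow_sum, hd]
  ring

variable [Fintype σ]

/-- `P` is a solid harmonic of degree `k`: a homogeneous polynomial of degree `k` whose
Laplacian vanishes. -/
structure IsSolidHarmonic (k : ℕ) (P : MvPolynomial σ R) : Prop where
  isHomogeneous : P.IsHomogeneous k
  laplacian_eq_zero : ∑ i, pderiv i (pderiv i P) = 0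

theorem IsSolidHarmonic.pderiv {k : ℕ} {P : MvPolynomial σ R} (hP : IsSolidHarmonic k P) (i : σ) :
    IsSolidHarmonic (k - 1) (pderiv i P) where
  isHomogeneous := hP.isHomogeneous.pderiv
  laplacian_eq_zero := by
    simp only [pderiv_pderiv_comm _ i, ← map_sum, hP.laplacian_eq_zero, map_zero]

end Polynomial

section PolarCoordinates

open Set

theorem integral_volumeIoiPow {F : Type*} [NormedAddCommGroup F] [NormedSpace ℝ F] (k : ℕ)
    (g : ℝ → F) :
    ∫ r : Ioi (0 : ℝ), g r ∂Measure.volumeIoiPow k = ∫ r in Ioi (0 : ℝ), r ^ k • g r := by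
  simp only [Measure.volumeIoiPow, ENNReal.ofReal]
  rw [integral_withDensity_eq_integral_smul (measurable_subtype_coe.pow_const _).real_toNNReal,
    integral_subtype_comap measurableSet_Ioi fun r => Real.toNNReal (r ^ k) • g r]
  refine setIntegral_congr_fun measurableSet_Ioi fun r (hr : 0 < r) => ?_
  rw [NNReal.smul_def, Real.coe_toNNReal _ (by positivity)]

theorem integral_homogeneous_mul_radial {E : Type*} [NormedAddCommGroup E] [NormedSpace ℝ E]
    [FiniteDimensional ℝ E] [Nontrivial E] [MeasurableSpace E] [BorelSpace E] (μ : Measure E)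
    [μ.IsAddHaarMeasure] {f : E → ℝ} {d : ℕ} (hf : ∀ r > 0, ∀ x, f (r • x) = r ^ d * f x)
    (g : ℝ → ℝ) :
    ∫ x, f x * g ‖x‖ ∂μ = (∫ x : Metric.sphere (0 : E) 1, f x ∂μ.toSphere) *
      ∫ r in Ioi (0 : ℝ), r ^ (Module.finrank ℝ E - 1 + d) * g r := by
  calc ∫ x, f x * g ‖x‖ ∂μ
      = ∫ x : ({0}ᶜ : Set E), f x * g ‖x.1‖ ∂μ.comap (↑) := by
        rw [integral_subtype_comap (measurableSet_singleton _).compl fun x => f x * g ‖x‖,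
          restrict_compl_singleton]
    _ = ∫ z, f z.1 * (z.2.1 ^ d * g z.2)
          ∂μ.toSphere.prod (.volumeIoiPow (Module.finrank ℝ E - 1)) := by
        rw [← μ.measurePreserving_homeomorphUnitSphereProd.integral_comp
          (Homeomorph.measurableEmbedding _)]
        refine integral_congr_ae (.of_forall fun x => ?_)
        have hx : f x = ‖x.1‖ ^ d * f (‖x.1‖⁻¹ • x.1) := by
          rw [← hf _ (norm_pos_iff.2 x.2), smul_inv_smul₀ (norm_ne_zero_iff.2 x.2)]
        simp only [hx, homeomorphUnitSphereProd_apply_fst_coe,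
          homeomorphUnitSphereProd_apply_snd_coe]
        ring
    _ = (∫ x : Metric.sphere (0 : E) 1, f x ∂μ.toSphere) *
          ∫ r : Ioi (0 : ℝ), r.1 ^ d * g r ∂.volumeIoiPow (Module.finrank ℝ E - 1) :=
        integral_prod_mul (fun x : Metric.sphere (0 : E) 1 => f x)
          fun r : Ioi (0 : ℝ) => r.1 ^ d * g r
    _ = _ := by
        rw [integral_volumeIoiPow _ fun r => r ^ d * g r]
        simp only [smul_eq_mul, pow_add, mul_assoc]

theorem integral_pow_mul_exp_neg_sq (m : ℕ) :
    ∫ r in Ioi (0 : ℝ), r ^ m * Real.exp (-r ^ 2) = Real.Gamma ((m + 1) / 2) / 2 := by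
  have h := integral_rpow_mul_exp_neg_rpow (p := 2) (q := m) two_pos
    (neg_one_lt_zero.trans_le m.cast_nonneg)
  simp only [Real.rpow_natCast, Real.rpow_two] at h
  rw [h, one_div_mul_eq_div]

end PolarCoordinates

section GaussianIntegral

theorem hasLineDerivAt_eval {ι : Type*} [DecidableEq ι] (P : MvPolynomial ι ℝ) (i : ι)
    (x : EuclideanSpace ℝ ι) :
    HasLineDerivAt ℝ (fun y : EuclideanSpace ℝ ι => eval y.ofLp P) (eval x.ofLp (pderiv i P)) x
      (EuclideanSpace.single i 1) := by
  unfold HasLineDerivAt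
  induction P using MvPolynomial.induction_on with
  | C a => simpa using hasDerivAt_const (0 : ℝ) a
  | add P Q hP hQ => simpa using hP.fun_add hQ
  | mul_X P k hP =>
    have hX : HasDerivAt (fun t : ℝ => eval (x + t • EuclideanSpace.single i (1 : ℝ)).ofLp (X k))
        (eval x.ofLp (pderiv i (X k))) 0 := by
      have h : HasDerivAt (fun t : ℝ => x.ofLp k + t * (Pi.single i 1 : ι → ℝ) k)
          ((Pi.single i 1 : ι → ℝ) k) 0 := by
        simpa using ((hasDerivAt_id (0 : ℝ)).mul_const ((Pi.single i 1 : ι → ℝ) k)).const_add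
          (x.ofLp k)
      convert h using 1
      · simp
      · rw [pderiv_X]
        by_cases hik : i = k <;> simp [hik]
    simpa [pderiv_mul, mul_comm, add_comm] using hP.fun_mul hX

theorem hasLineDerivAt_exp_neg_norm_sq {E : Type*} [NormedAddCommGroup E] [InnerProductSpace ℝ E]
    (x v : E) :
    HasLineDerivAt ℝ (fun y : E => Real.exp (-‖y‖ ^ 2))
      (-(2 * inner ℝ x v) * Real.exp (-‖x‖ ^ 2)) x v := by
  convert (hasStrictFDerivAt_norm_sq x).hasFDerivAt.fun_neg.exp.hasLineDerivAt v using 1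
  simp only [neg_mul, smul_neg, neg_apply, smul_apply, coe_innerSL_apply, nsmul_eq_mul,
    Nat.cast_ofNat, smul_eq_mul]
  ring

variable {ι : Type*} [Fintype ι]

theorem integrable_eval_mul_exp_neg_norm_sq (P : MvPolynomial ι ℝ) :
    Integrable fun x : EuclideanSpace ℝ ι => eval x.ofLp P * Real.exp (-‖x‖ ^ 2) := by
  induction P using MvPolynomial.induction_on' with
  | add P Q hP hQ => simpa only [map_add, add_mul] using hP.fun_add hQ
  | monomial m c =>
    have hpow (k : ℕ) : Integrable fun t : ℝ => t ^ k * Real.exp (-t ^ 2) := by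
      simpa using integrable_rpow_mul_exp_neg_mul_sq one_pos
        (neg_one_lt_zero.trans_le (k.cast_nonneg (α := ℝ)))
    have hprod : Integrable fun x : ι → ℝ => c * ∏ i, x i ^ m i * Real.exp (-x i ^ 2) :=
      (Integrable.fintype_prod fun i => hpow (m i)).const_mul c
    refine ((PiLp.volume_preserving_ofLp ι).integrable_comp_of_integrable hprod).congr
      (.of_forall fun x => ?_)
    simp [EuclideanSpace.real_norm_sq_eq, Finset.prod_mul_distrib, ← Real.exp_sum, eval_monomial,
      Finsupp.prod_fintype, mul_assoc]

/-- Integration of polynomials on `ℝ^ι` against the Gaussian weight `exp (-‖x‖²)`. Unlike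
on the sphere, integrating a partial derivative by parts costs only a factor `2 xᵢ` here. -/
noncomputable def gaussianIntegral : MvPolynomial ι ℝ →ₗ[ℝ] ℝ where
  toFun P := ∫ x : EuclideanSpace ℝ ι, eval x.ofLp P * Real.exp (-‖x‖ ^ 2)
  map_add' P Q := by
    simp only [map_add, add_mul]
    exact integral_add (integrable_eval_mul_exp_neg_norm_sq P)
      (integrable_eval_mul_exp_neg_norm_sq Q)
  map_smul' c P := by
    simp only [smul_eval, mul_assoc, integral_const_mul, RingHom.id_apply, smul_eq_mul]

theorem gaussianIntegral_pderiv (P : MvPolynomial ι ℝ) (i : ι) :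
    gaussianIntegral (pderiv i P) = 2 * gaussianIntegral (X i * P) := by
  classical
  have hweight (x : EuclideanSpace ℝ ι) :
      eval x.ofLp P * (-(2 * inner ℝ x (EuclideanSpace.single i 1)) * Real.exp (-‖x‖ ^ 2)) =
        eval x.ofLp ((-2 : ℝ) • (X i * P)) * Real.exp (-‖x‖ ^ 2) := by
    simp only [EuclideanSpace.inner_single_right, Real.ringHom_apply, one_mul, smul_eval, map_mul,
      eval_X]
    ring
  have hparts := integral_bilinear_hasLineDerivAt_right_eq_neg_left_of_integrable
    (μ := volume) (B := ContinuousLinearMap.mul ℝ ℝ)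
    (integrable_eval_mul_exp_neg_norm_sq (pderiv i P))
    (by simpa only [ContinuousLinearMap.mul_apply', hweight] using
      integrable_eval_mul_exp_neg_norm_sq ((-2 : ℝ) • (X i * P)))
    (integrable_eval_mul_exp_neg_norm_sq P) (fun x _ => hasLineDerivAt_eval P i x)
    (fun x _ => hasLineDerivAt_exp_neg_norm_sq x (EuclideanSpace.single i 1))
  simp only [ContinuousLinearMap.mul_apply', hweight] at hparts
  have h : gaussianIntegral ((-2 : ℝ) • (X i * P)) = -gaussianIntegral (pderiv i P) := hparts
  rw [map_smul, smul_eq_mul] at h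
  linarith

theorem sum_gaussianIntegral_pderiv_mul_pderiv (P : MvPolynomial ι ℝ) {Q : MvPolynomial ι ℝ}
    {k : ℕ} (hQ : Q.IsHomogeneous k) :
    ∑ i, gaussianIntegral (pderiv i P * pderiv i Q) =
      2 * k * gaussianIntegral (P * Q) -
        gaussianIntegral (P * ∑ i, pderiv i (pderiv i Q)) := by
  have heuler : ∑ i, X i * (P * pderiv i Q) = (k : ℝ) • (P * Q) := by
    simp only [mul_left_comm _ P, ← Finset.mul_sum, hQ.sum_X_mul_pderiv, mul_smul_comm,
      Nat.cast_smul_eq_nsmul]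
  rw [eq_sub_iff_add_eq]
  calc ∑ i, gaussianIntegral (pderiv i P * pderiv i Q) +
        gaussianIntegral (P * ∑ i, pderiv i (pderiv i Q))
      = ∑ i, gaussianIntegral (pderiv i (P * pderiv i Q)) := by
        simp only [pderiv_mul, map_add, Finset.sum_add_distrib, Finset.mul_sum, map_sum]
    _ = 2 * gaussianIntegral (∑ i, X i * (P * pderiv i Q)) := by
        simp only [gaussianIntegral_pderiv, ← Finset.mul_sum, map_sum]
    _ = 2 * k * gaussianIntegral (P * Q) := by
        rw [heuler, map_smul, smul_eq_mul, mul_assoc]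

theorem gaussianIntegral_eq_integral_sphere [Nonempty ι] {P : MvPolynomial ι ℝ} {d : ℕ}
    (hP : P.IsHomogeneous d) :
    gaussianIntegral P =
      (∫ x : Metric.sphere (0 : EuclideanSpace ℝ ι) 1, eval x.1.ofLp P
        ∂(volume : Measure (EuclideanSpace ℝ ι)).toSphere) *
      (Real.Gamma ((d + Fintype.card ι) / 2) / 2) := by
  have hexp : ((Fintype.card ι - 1 + d : ℕ) : ℝ) + 1 = d + Fintype.card ι := by
    have := Fintype.card_pos (α := ι)
    norm_cast
    lia
  have hpolar := integral_homogeneous_mul_radial (volume : Measure (EuclideanSpace ℝ ι))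
    (f := fun x => eval x.ofLp P) (fun r _ x => eval_smul_of_isHomogeneous hP r x.ofLp)
    fun r => Real.exp (-r ^ 2)
  rwa [integral_pow_mul_exp_neg_sq, finrank_euclideanSpace, hexp] at hpolar

end GaussianIntegral

section Seeley

variable {ι : Type*} [Fintype ι]

/-- The squared norm `‖P‖²` in `L²(S^{n-1})` of a polynomial `P`. -/
noncomputable def sphereNormSq (P : MvPolynomial ι ℝ) : ℝ :=
  ∫ x : Metric.sphere (0 : EuclideanSpace ℝ ι) 1, eval x.1.ofLp P ^ 2
    ∂(volume : Measure (EuclideanSpace ℝ ι)).toSphere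

theorem sphereNormSq_nonneg (P : MvPolynomial ι ℝ) : 0 ≤ sphereNormSq P :=
  integral_nonneg fun _ => sq_nonneg _

theorem gaussianIntegral_sq [Nonempty ι] {P : MvPolynomial ι ℝ} {k : ℕ}
    (hP : P.IsHomogeneous k) :
    gaussianIntegral (P ^ 2) =
      sphereNormSq P * (Real.Gamma (k + Fintype.card ι / 2) / 2) := by
  rw [gaussianIntegral_eq_integral_sphere (hP.pow 2)]
  simp only [map_pow, sphereNormSq]
  congr 3
  push_cast
  ring

theorem IsSolidHarmonic.sum_sphereNormSq_pderiv [Nonempty ι] {P : MvPolynomial ι ℝ} {k : ℕ}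
    (hP : IsSolidHarmonic k P) :
    ∑ i, sphereNormSq (MvPolynomial.pderiv i P) =
      k * (Fintype.card ι + 2 * k - 2) * sphereNormSq P := by
  obtain _ | k := k
  · have hconst := totalDegree_eq_zero_iff_eq_C.1
      ((totalDegree_zero_iff_isHomogeneous ι).2 hP.isHomogeneous)
    rw [hconst]
    simp [sphereNormSq]
  · have hgauss := sum_gaussianIntegral_pderiv_mul_pderiv P hP.isHomogeneous
    have hpos : (0 : ℝ) < k + Fintype.card ι / 2 := by
      have := Fintype.card_pos (α := ι)
      positivity
    have hGamma : Real.Gamma ((k + 1 : ℕ) + Fintype.card ι / 2) =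
        (k + Fintype.card ι / 2) * Real.Gamma (k + Fintype.card ι / 2) := by
      rw [← Real.Gamma_add_one hpos.ne']
      push_cast
      ring_nf
    simp only [hP.laplacian_eq_zero, mul_zero, map_zero, sub_zero, ← sq,
      gaussianIntegral_sq hP.isHomogeneous, gaussianIntegral_sq (hP.pderiv _).isHomogeneous,
      Nat.add_sub_cancel, hGamma, ← Finset.sum_mul] at hgauss
    refine mul_right_cancel₀ (half_pos (Real.Gamma_pos_of_pos hpos)).ne' (hgauss.trans ?_)
    push_cast
    ring

theorem IsSolidHarmonic.sphereNormSq_pderiv_le [Nonempty ι] {P : MvPolynomial ι ℝ} {k : ℕ}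
    (hP : IsSolidHarmonic k P) (i : ι) :
    sphereNormSq (MvPolynomial.pderiv i P) ≤
      k * (Fintype.card ι + 2 * k - 2) * sphereNormSq P := by
  rw [← hP.sum_sphereNormSq_pderiv]
  exact Finset.single_le_sum (f := fun i => sphereNormSq (MvPolynomial.pderiv i P))
    (fun _ _ => sphereNormSq_nonneg _) (Finset.mem_univ i)

end Seeley

section MultiIndex

/-- The constant produced by `m` successive applications of Seeley's inequality to a solid harmonic
of degree `k` on `ℝ^n`. The degrees `k - l` are truncated at `0`, so the constant is `0` if
`k < m`. -/
noncomputable def seeleyConstant (n k m : ℕ) : ℝ :=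
  ∏ l ∈ Finset.range m, ((k - l : ℕ) : ℝ) * (n + 2 * (k - l : ℕ) - 2)

theorem seeleyConstant_nonneg (n k m : ℕ) : 0 ≤ seeleyConstant n k m := by
  refine Finset.prod_nonneg fun l _ => ?_
  obtain h | h := Nat.eq_zero_or_pos (k - l)
  · simp [h]
  · have : (1 : ℝ) ≤ (k - l : ℕ) := by exact_mod_cast h
    exact mul_nonneg (Nat.cast_nonneg _) (by linarith [n.cast_nonneg (α := ℝ)])

theorem seeleyConstant_add (n k a b : ℕ) :
    seeleyConstant n k (a + b) = seeleyConstant n k a * seeleyConstant n (k - a) b := by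
  simp only [seeleyConstant, Finset.prod_range_add, Nat.sub_sub]

theorem seeleyConstant_le {n j m : ℕ} (hn : 2 ≤ n) (hm : m ≤ j) :
    seeleyConstant n j m ≤ 2 ^ m * (j : ℝ) ^ (2 * m) * Real.exp ((n : ℝ) / 2 - 1) := by
  set c : ℝ := (n : ℝ) / 2 - 1 with hc
  have hn' : (2 : ℝ) ≤ n := by exact_mod_cast hn
  have hc0 : 0 ≤ c := by linarith
  have hfactor (l : ℕ) :
      ((j - l : ℕ) : ℝ) * (n + 2 * (j - l : ℕ) - 2) ≤ 2 * (j : ℝ) ^ 2 * Real.exp (c / j) := by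
    have hl : ((j - l : ℕ) : ℝ) ≤ j := by exact_mod_cast j.sub_le l
    calc ((j - l : ℕ) : ℝ) * (n + 2 * (j - l : ℕ) - 2) ≤ j * (n + 2 * j - 2) := by
          gcongr
          linarith [(j - l).cast_nonneg (α := ℝ)]
      _ = 2 * (j : ℝ) ^ 2 * (c / j + 1) := by
          obtain rfl | hj := eq_or_ne j 0
          · simp
          · rw [hc]
            field_simp
            ring
      _ ≤ 2 * (j : ℝ) ^ 2 * Real.exp (c / j) := by
          gcongr
          exact Real.add_one_le_exp _
  calc seeleyConstant n j m ≤ ∏ _l ∈ Finset.range m, 2 * (j : ℝ) ^ 2 * Real.exp (c / j) := by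
        refine Finset.prod_le_prod (fun l _ => ?_) fun l _ => hfactor l
        exact mul_nonneg (Nat.cast_nonneg _) (by linarith [(j - l).cast_nonneg (α := ℝ)])
    _ = 2 ^ m * (j : ℝ) ^ (2 * m) * Real.exp (c * (m / j)) := by
        rw [Finset.prod_const, Finset.card_range, mul_pow, mul_pow, ← pow_mul, ← Real.exp_nat_mul]
        ring_nf
    _ ≤ 2 ^ m * (j : ℝ) ^ (2 * m) * Real.exp c := by
        gcongr
        exact mul_le_of_le_one_right hc0
          (div_le_one_of_le₀ (by exact_mod_cast hm) (Nat.cast_nonneg _))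

variable {ι : Type*} [Fintype ι]

/-- `D` behaves on solid harmonics like a partial derivative of order `m`: it lowers their degree by
`m` and satisfies the `m`-fold Seeley inequality. Unlike the inequality alone, this notion is closed
under composition. -/
def IsSeeleyOperator (m : ℕ) (D : Module.End ℝ (MvPolynomial ι ℝ)) : Prop :=
  ∀ ⦃k : ℕ⦄ ⦃P : MvPolynomial ι ℝ⦄, IsSolidHarmonic k P →
    IsSolidHarmonic (k - m) (D P) ∧
      sphereNormSq (D P) ≤ seeleyConstant (Fintype.card ι) k m * sphereNormSq P

namespace IsSeeleyOperator

theorem one : IsSeeleyOperator 0 (1 : Module.End ℝ (MvPolynomial ι ℝ)) :=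
  fun _ _ hP => ⟨hP, by simp [seeleyConstant]⟩

theorem pderiv [Nonempty ι] (i : ι) :
    IsSeeleyOperator 1 (MvPolynomial.pderiv (R := ℝ) i).toLinearMap :=
  fun _ _ hP => ⟨hP.pderiv i, by simpa [seeleyConstant] using hP.sphereNormSq_pderiv_le i⟩

theorem mul {a b : ℕ} {D E : Module.End ℝ (MvPolynomial ι ℝ)} (hD : IsSeeleyOperator a D)
    (hE : IsSeeleyOperator b E) : IsSeeleyOperator (b + a) (D * E) := by
  intro k P hP
  obtain ⟨hEP, hE_le⟩ := hE hP
  obtain ⟨hDEP, hD_le⟩ := hD hEP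
  refine ⟨Nat.sub_sub k b a ▸ hDEP, hD_le.trans ?_⟩
  rw [seeleyConstant_add, mul_comm (seeleyConstant _ k b), mul_assoc]
  exact mul_le_mul_of_nonneg_left hE_le (seeleyConstant_nonneg _ _ _)

theorem pow {a : ℕ} {D : Module.End ℝ (MvPolynomial ι ℝ)} (hD : IsSeeleyOperator a D) (m : ℕ) :
    IsSeeleyOperator (m * a) (D ^ m) := by
  induction m with
  | zero => simpa using one
  | succ m ih => simpa only [pow_succ', Nat.succ_mul] using hD.mul ih

theorem list_prod_map {κ : Type*} {a : κ → ℕ} {D : κ → Module.End ℝ (MvPolynomial ι ℝ)}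
    (hD : ∀ i, IsSeeleyOperator (a i) (D i)) (l : List κ) :
    IsSeeleyOperator (l.map a).sum (l.map D).prod := by
  induction l with
  | nil => exact one
  | cons i l ih =>
    rw [List.map_cons, List.map_cons, List.sum_cons, List.prod_cons, add_comm]
    exact (hD i).mul ih

theorem pderivMulti {n : ℕ} [NeZero n] (α : Fin n → ℕ) :
    IsSeeleyOperator (∑ i, α i) (pderivMulti n α) := by
  have h := list_prod_map (fun i => (pderiv i).pow (α i)) (List.finRange n)
  simpa only [_root_.pderivMulti, mul_one, ← List.ofFn_eq_map, List.sum_ofFn] using h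

end IsSeeleyOperator

end MultiIndex

/-- If `Q_j` is a solid harmonic of degree `j` on `ℝ^n` (a harmonic
homogeneous polynomial), then for every multi-index `α` with `|α| ≤ j`,
`‖∂^α Q_j‖²_{L²(S^{n-1})} ≤ 2^{|α|} · j^{2|α|} · e^{n/2−1} · ‖Q_j‖²_{L²(S^{n-1})}`. -/
theorem stmt8 (n j : ℕ) (hn : 2 ≤ n) (Q : MvPolynomial (Fin n) ℝ)
    (hhom : Q.IsHomogeneous j)
    (hharm : (∑ i : Fin n, pderiv i (pderiv i Q)) = 0)
    (α : Fin n → ℕ) (hα : ∑ i, α i ≤ j) :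
    ∫ x : Metric.sphere (0 : EuclideanSpace ℝ (Fin n)) 1,
        (MvPolynomial.eval (fun i => (x : EuclideanSpace ℝ (Fin n)) i) (pderivMulti n α Q)) ^ 2
        ∂(sphereMeas n)
      ≤ 2 ^ (∑ i, α i) * (j : ℝ) ^ (2 * ∑ i, α i) * Real.exp ((n : ℝ) / 2 - 1) *
        ∫ x : Metric.sphere (0 : EuclideanSpace ℝ (Fin n)) 1,
          (MvPolynomial.eval (fun i => (x : EuclideanSpace ℝ (Fin n)) i) Q) ^ 2
          ∂(sphereMeas n) := by
  have : NeZero n := ⟨by lia⟩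
  obtain ⟨-, hseeley⟩ := IsSeeleyOperator.pderivMulti α (k := j) (P := Q) ⟨hhom, hharm⟩
  rw [Fintype.card_fin] at hseeley
  exact hseeley.trans
    (mul_le_mul_of_nonneg_right (seeleyConstant_le hn hα) (sphereNormSq_nonneg Q))
end

section
/- Let f be a compactly supported distribution (or non-quasianalytic ultradistribution) on S^{n-1} and let K₁ ⊂ S^{n-1} be a closed set disjoint from supp f. Then the Poisson transform P[f](rω) = ⟨f(ξ), P(rω,ξ)⟩ tends to 0 as r → 1⁻, uniformly for ω ∈ K₁; moreover there is a constant C with |P[f](rω)| ≤ C(1−r) for all ω ∈ K₁ and 1/2 ≤ r < 1. -/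
/-- The degree-0 homogeneous extension (in `ξ`) of the Poisson kernel
`ξ ↦ P(rω, ξ) = S⁻¹(1−r²)/|rω−ξ|^n` of the unit ball, with surface-area constant `S`. -/
noncomputable def poissonExt (n : ℕ) (S r : ℝ) (ω : EuclideanSpace ℝ (Fin n)) :
    EuclideanSpace ℝ (Fin n) → ℝ := fun ξ =>
  S⁻¹ * (1 - r ^ 2) / ‖r • ω - ‖ξ‖⁻¹ • ξ‖ ^ n

/-!
The function `|x - ξ/|ξ||⁻ᵐ` is jointly real analytic around the compact set `[0,1]·K₁ × K₂`, on
which `x ≠ ξ/|ξ|`, so by compactness its `k`-th `ξ`-derivatives on `K₂` are at most `B k! Rᵏ`, with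
`B` and `R` independent of `x = rω`. Log-convexity together with `∑ Mₖ / Mₖ₊₁ < ∞` forces
`k Mₖ / Mₖ₊₁ → 0`, so `k! Lᵏ` is negligible against `Mₖ` for every `L`. Hence the seminorms
controlling `f` stay bounded on these functions, and the decay comes from the factor `1 - r²` of the
Poisson kernel alone.
-/

section PoissonTransform

open Set Filter Asymptotics Metric
open scoped NNReal ENNReal Topology Pointwise

section AnalyticBounds

variable {𝕜 E F G : Type*} [NontriviallyNormedField 𝕜]
  [NormedAddCommGroup E] [NormedSpace 𝕜 E] [NormedAddCommGroup F] [NormedSpace 𝕜 F]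
  [NormedAddCommGroup G] [NormedSpace 𝕜 G]

theorem exists_nnnorm_changeOrigin_mul_pow_le (p : FormalMultilinearSeries 𝕜 E F) {a : ℝ≥0}
    (ha : (a + a : ℝ≥0∞) < p.radius) :
    ∃ B : ℝ≥0, ∀ y : E, ‖y‖₊ ≤ a → ∀ k, ‖p.changeOrigin y k‖₊ * a ^ k ≤ B := by
  let u (r : ℝ≥0) (k : ℕ) (s : Σ l : ℕ, {s : Finset (Fin (k + l)) // s.card = l}) : ℝ≥0 :=
    ‖p (k + s.1)‖₊ * r ^ s.1
  have summable_u {r : ℝ≥0} (hr : r ≤ a) (k : ℕ) : Summable (u r k) :=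
    p.changeOriginSeries_summable_aux₂
      (((ENNReal.coe_le_coe.2 hr).trans le_self_add).trans_lt ha) k
  have summable_tsum : Summable fun k => ∑' s, u a k s * a ^ k :=
    (NNReal.summable_sigma.1 (p.changeOriginSeries_summable_aux₁ ha)).2
  refine ⟨∑' k, ∑' s, u a k s * a ^ k, fun y hy k => ?_⟩
  have hy' : (‖y‖₊ : ℝ≥0∞) < p.radius :=
    ((ENNReal.coe_le_coe.2 hy).trans le_self_add).trans_lt ha
  calc ‖p.changeOrigin y k‖₊ * a ^ k
      ≤ (∑' s, u ‖y‖₊ k s) * a ^ k := by gcongr; exact p.nnnorm_changeOrigin_le k hy'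
    _ ≤ (∑' s, u a k s) * a ^ k := by
        gcongr ?_ * _
        exact (summable_u hy k).tsum_le_tsum (fun s => by dsimp only [u]; gcongr)
          (summable_u le_rfl k)
    _ = ∑' s, u a k s * a ^ k := (NNReal.tsum_mul_right _ _).symm
    _ ≤ ∑' k, ∑' s, u a k s * a ^ k := summable_tsum.le_tsum k fun _ _ => zero_le

theorem norm_iteratedFDeriv_le_factorial_mul_norm [CompleteSpace F] {f : E → F}
    {p : FormalMultilinearSeries 𝕜 E F} {x : E} {r : ℝ≥0∞} (hf : HasFPowerSeriesOnBall f p x r)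
    (k : ℕ) : ‖iteratedFDeriv 𝕜 k f x‖ ≤ k.factorial * ‖p k‖ := by
  refine ContinuousMultilinearMap.opNorm_le_bound (by positivity) fun v => ?_
  calc ‖iteratedFDeriv 𝕜 k f x v‖
      = ‖∑ σ : Equiv.Perm (Fin k), p k fun i => v (σ i)‖ := by
        rw [hf.iteratedFDeriv_eq_sum_of_completeSpace v]
    _ ≤ ∑ σ : Equiv.Perm (Fin k), ‖p k fun i => v (σ i)‖ := norm_sum_le _ _
    _ ≤ ∑ _σ : Equiv.Perm (Fin k), ‖p k‖ * ∏ i, ‖v i‖ := by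
        refine Finset.sum_le_sum fun σ _ => ((p k).le_opNorm _).trans_eq ?_
        rw [Equiv.prod_comp σ fun i => ‖v i‖]
    _ = k.factorial * ‖p k‖ * ∏ i, ‖v i‖ := by simp [Fintype.card_perm, mul_assoc]

theorem exists_eventually_norm_iteratedFDeriv_le_of_analyticAt [CompleteSpace F] {g : E → F}
    {x₀ : E} (hg : AnalyticAt 𝕜 g x₀) :
    ∃ B R : ℝ≥0, ∀ᶠ x in 𝓝 x₀, ∀ k : ℕ, ‖iteratedFDeriv 𝕜 k g x‖ ≤ B * k.factorial * R ^ k := by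
  obtain ⟨p, r, hp⟩ := hg
  obtain ⟨b, hb0, hbr⟩ := ENNReal.lt_iff_exists_nnreal_btwn.1 hp.r_pos
  obtain ⟨a, rfl⟩ : ∃ a, b = a + a := ⟨b / 2, (add_halves b).symm⟩
  have ha : 0 < a := by simpa using hb0
  rw [ENNReal.coe_add] at hbr
  obtain ⟨B, hB⟩ := exists_nnnorm_changeOrigin_mul_pow_le p (hbr.trans_le hp.r_le)
  refine ⟨B, a⁻¹, ?_⟩
  filter_upwards [ball_mem_nhds x₀ (NNReal.coe_pos.2 ha)] with x hx k
  have hxa : ‖x - x₀‖₊ ≤ a := (mem_ball_iff_norm.1 hx).le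
  have series_at_x := hp.changeOrigin (y := x - x₀)
    (((ENNReal.coe_le_coe.2 hxa).trans le_self_add).trans_lt hbr)
  rw [add_sub_cancel] at series_at_x
  have coeff_le : ‖p.changeOrigin (x - x₀) k‖ ≤ B * (a⁻¹ : ℝ≥0) ^ k := by
    rw [NNReal.coe_inv, inv_pow, ← div_eq_mul_inv, le_div_iff₀ (by positivity)]
    exact_mod_cast hB _ hxa k
  calc ‖iteratedFDeriv 𝕜 k g x‖
      ≤ k.factorial * ‖p.changeOrigin (x - x₀) k‖ :=
        norm_iteratedFDeriv_le_factorial_mul_norm series_at_x k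
    _ ≤ k.factorial * (B * (a⁻¹ : ℝ≥0) ^ k) := by gcongr
    _ = B * k.factorial * (a⁻¹ : ℝ≥0) ^ k := by ring

theorem exists_norm_iteratedFDeriv_le_of_isCompact [CompleteSpace F] {g : E → F} {K : Set E}
    (hK : IsCompact K) (hg : AnalyticOnNhd 𝕜 g K) :
    ∃ B R : ℝ≥0, ∀ x ∈ K, ∀ k : ℕ, ‖iteratedFDeriv 𝕜 k g x‖ ≤ B * k.factorial * R ^ k := by
  refine hK.induction_on (p := fun K => ∃ B R : ℝ≥0, ∀ x ∈ K, ∀ k : ℕ,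
    ‖iteratedFDeriv 𝕜 k g x‖ ≤ B * k.factorial * R ^ k) ⟨0, 0, by simp⟩ ?mono ?union ?nhds
  case mono =>
    rintro s t hst ⟨B, R, ht⟩
    exact ⟨B, R, fun x hx => ht x (hst hx)⟩
  case union =>
    rintro s t ⟨B, R, hs⟩ ⟨B', R', ht⟩
    refine ⟨max B B', max R R', ?_⟩
    rintro x (hx | hx) k
    · exact (hs x hx k).trans (by gcongr <;> exact le_max_left _ _)
    · exact (ht x hx k).trans (by gcongr <;> exact le_max_right _ _)
  case nhds =>
    intro x hx
    obtain ⟨B, R, hBR⟩ := exists_eventually_norm_iteratedFDeriv_le_of_analyticAt (hg x hx)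
    exact ⟨_, mem_nhdsWithin_of_mem_nhds hBR, B, R, fun _ hy => hy⟩

theorem iteratedFDeriv_comp_right_of_contDiffAt (L : E →L[𝕜] F) {g : F → G} {x : E} {k : ℕ}
    (hg : ContDiffAt 𝕜 k g (L x)) :
    iteratedFDeriv 𝕜 k (g ∘ L) x =
      (iteratedFDeriv 𝕜 k g (L x)).compContinuousLinearMap fun _ => L := by
  obtain ⟨U, hU, hxU, hgU⟩ : ∃ U, IsOpen U ∧ L x ∈ U ∧ ContDiffOn 𝕜 k g U := by
    simpa using (contDiffWithinAt_univ.2 hg).contDiffOn' le_rfl (by simp)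
  have hLU : IsOpen (L ⁻¹' U) := hU.preimage L.continuous
  rw [← iteratedFDerivWithin_of_isOpen k hLU hxU, ← iteratedFDerivWithin_of_isOpen k hU hxU,
    L.iteratedFDerivWithin_comp_right hgU hU.uniqueDiffOn hLU.uniqueDiffOn hxU le_rfl]

theorem norm_iteratedFDeriv_prodMk_le {g : E × F → G} {z : E × F} {k : ℕ}
    (hg : ContDiffAt 𝕜 k g z) :
    ‖iteratedFDeriv 𝕜 k (fun ξ => g (z.1, ξ)) z.2‖ ≤ ‖iteratedFDeriv 𝕜 k g z‖ := by
  let inr := ContinuousLinearMap.inr 𝕜 E F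
  let g' : E × F → G := fun w => g ((z.1, 0) + w)
  have base_point : (z.1, 0) + inr z.2 = z := by simp [inr]
  have hg' : ContDiffAt 𝕜 k g' (inr z.2) :=
    ContDiffAt.comp (inr z.2) (base_point.symm ▸ hg) (by fun_prop)
  have slice : (fun ξ => g (z.1, ξ)) = g' ∘ inr := by ext; simp [g', inr]
  calc ‖iteratedFDeriv 𝕜 k (fun ξ => g (z.1, ξ)) z.2‖
      = ‖(iteratedFDeriv 𝕜 k g' (inr z.2)).compContinuousLinearMap fun _ => inr‖ := by
        rw [slice, iteratedFDeriv_comp_right_of_contDiffAt inr hg']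
    _ ≤ ‖iteratedFDeriv 𝕜 k g' (inr z.2)‖ * ∏ _i : Fin k, ‖inr‖ :=
        ContinuousMultilinearMap.norm_compContinuousLinearMap_le _ _
    _ ≤ ‖iteratedFDeriv 𝕜 k g' (inr z.2)‖ :=
        mul_le_of_le_one_right (norm_nonneg _) <| Finset.prod_le_one
          (fun _ _ => norm_nonneg _) fun _ _ => ContinuousLinearMap.norm_inr_le_one 𝕜 E F
    _ = ‖iteratedFDeriv 𝕜 k g z‖ := by rw [iteratedFDeriv_comp_add_left, base_point]

end AnalyticBounds

section WeightSequences

theorem tendsto_natCast_mul_of_antitone_of_summable {u : ℕ → ℝ} (hu : Antitone u)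
    (hs : Summable u) : Tendsto (fun n : ℕ => (n : ℝ) * u n) atTop (𝓝 0) := by
  have u_nonneg (n : ℕ) : 0 ≤ u n := hu.le_of_tendsto hs.tendsto_atTop_zero n
  have block_tendsto : Tendsto (fun n => 2 * ∑ i ∈ Finset.Ico (n / 2) n, u i) atTop (𝓝 0) := by
    have partial_sums := hs.hasSum.tendsto_sum_nat
    have half : Tendsto (fun n : ℕ => n / 2) atTop atTop := Nat.tendsto_div_const_atTop two_ne_zero
    simpa [Finset.sum_Ico_eq_sub _ (Nat.div_le_self _ 2)] using
      (partial_sums.sub (partial_sums.comp half)).const_mul 2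
  refine squeeze_zero (fun n => mul_nonneg n.cast_nonneg (u_nonneg n)) (fun n => ?_) block_tendsto
  have card_le : (n : ℝ) ≤ 2 * (n - n / 2 : ℕ) := by
    exact_mod_cast (by omega : n ≤ 2 * (n - n / 2))
  have block_ge : (n - n / 2 : ℕ) * u n ≤ ∑ i ∈ Finset.Ico (n / 2) n, u i := by
    simpa using Finset.card_nsmul_le_sum (Finset.Ico (n / 2) n) u (u n)
      fun i hi => hu (Finset.mem_Ico.1 hi).2.le
  calc (n : ℝ) * u n ≤ 2 * (n - n / 2 : ℕ) * u n := by gcongr; exact u_nonneg n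
    _ = 2 * ((n - n / 2 : ℕ) * u n) := mul_assoc _ _ _
    _ ≤ 2 * ∑ i ∈ Finset.Ico (n / 2) n, u i := by gcongr

variable {M : ℕ → ℝ} (hM : ∀ p, 0 < M p)
include hM

theorem antitone_div_succ_of_sq_le (hlc : ∀ p : ℕ, 1 ≤ p → M p ^ 2 ≤ M (p - 1) * M (p + 1)) :
    Antitone fun p => M p / M (p + 1) := by
  refine antitone_nat_of_succ_le fun p => ?_
  rw [div_le_div_iff₀ (hM _) (hM _), ← sq]
  exact hlc (p + 1) p.succ_pos

theorem isLittleO_factorial_mul_pow_of_tendsto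
    (hlim : Tendsto (fun k : ℕ => (k + 1) * (M k / M (k + 1))) atTop (𝓝 0)) (L : ℝ) :
    (fun k : ℕ => k.factorial * L ^ k) =o[atTop] M := by
  have ratio_tendsto :
      Tendsto (fun k : ℕ => ‖L‖ * ((k + 1) * (M k / M (k + 1)))) atTop (𝓝 0) := by
    simpa using hlim.const_mul ‖L‖
  refine (isLittleO_iff_tendsto fun k hk => absurd hk (hM k).ne').2
    (summable_of_ratio_norm_eventually_le (r := 1 / 2) (by norm_num) ?_).tendsto_atTop_zero
  filter_upwards [ratio_tendsto.eventually_le_const one_half_pos] with k hk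
  calc ‖(k + 1).factorial * L ^ (k + 1) / M (k + 1)‖
      = ‖L‖ * ((k + 1) * (M k / M (k + 1))) * ‖k.factorial * L ^ k / M k‖ := by
        have := (hM k).ne'
        simp only [norm_div, norm_mul, norm_pow, RCLike.norm_natCast, Nat.factorial_succ,
          Real.norm_of_nonneg (hM _).le]
        push_cast
        field_simp
        ring
    _ ≤ 1 / 2 * ‖k.factorial * L ^ k / M k‖ := by gcongr

theorem isLittleO_factorial_mul_pow_of_summable
    (hlc : ∀ p : ℕ, 1 ≤ p → M p ^ 2 ≤ M (p - 1) * M (p + 1))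
    (hnq : Summable fun p => M p / M (p + 1)) (L : ℝ) :
    (fun k : ℕ => k.factorial * L ^ k) =o[atTop] M := by
  refine isLittleO_factorial_mul_pow_of_tendsto hM ?_ L
  have := (tendsto_natCast_mul_of_antitone_of_summable (antitone_div_succ_of_sq_le hM hlc) hnq).add
    hnq.tendsto_atTop_zero
  simpa only [add_mul, one_mul, add_zero] using this

end WeightSequences

section UltraSeminorm

variable {E F G : Type*} [NormedAddCommGroup E] [NormedSpace ℝ E]
  [NormedAddCommGroup F] [NormedSpace ℝ F] [NormedAddCommGroup G] [NormedSpace ℝ G]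
  {M : ℕ → ℝ} {h : ℝ} {K : Set E}

/-- The seminorm `sup_k sup_{ξ ∈ K} hᵏ ‖Dᵏφ(ξ)‖ / Mₖ` of the theory of ultradifferentiable
functions of class `M`. It takes values in `ℝ≥0∞`, so that it is `∞` rather than a junk value when
the supremum is infinite. -/
noncomputable def ultraSeminorm (M : ℕ → ℝ) (h : ℝ) (K : Set E) (φ : E → F) : ℝ≥0∞ :=
  ⨆ (k : ℕ), ⨆ ξ ∈ K, ENNReal.ofReal (h ^ k * ‖iteratedFDeriv ℝ k φ ξ‖ / M k)

theorem ultraSeminorm_const_smul {φ : E → F} (hφ : ∀ ξ ∈ K, ContDiffAt ℝ (⊤ : ℕ∞) φ ξ) (a : ℝ) :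
    ultraSeminorm M h K (a • φ) = ‖a‖ₑ * ultraSeminorm M h K φ := by
  simp only [ultraSeminorm, ENNReal.mul_iSup]
  refine iSup_congr fun k => iSup_congr fun ξ => iSup_congr fun hξ => ?_
  rw [iteratedFDeriv_const_smul_apply ((hφ ξ hξ).of_le (mod_cast le_top)), norm_smul,
    ← ofReal_norm, ← ENNReal.ofReal_mul (norm_nonneg a)]
  congr 1
  ring

theorem exists_ultraSeminorm_le_of_analyticOnNhd [CompleteSpace G] {g : E × F → G} {X : Set E}
    {K : Set F} (hX : IsCompact X) (hK : IsCompact K) (hg : AnalyticOnNhd ℝ g (X ×ˢ K))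
    (hM : ∀ p, 0 < M p) (hgrowth : ∀ L : ℝ, (fun k : ℕ => k.factorial * L ^ k) =O[atTop] M)
    (hh : 0 ≤ h) :
    ∃ B : ℝ≥0, ∀ x ∈ X, ultraSeminorm M h K (fun ξ => g (x, ξ)) ≤ B := by
  obtain ⟨B, R, hBR⟩ := exists_norm_iteratedFDeriv_le_of_isCompact (hX.prod hK) hg
  obtain ⟨W, hW⟩ := (isBigO_nat_atTop_iff fun k hk => absurd hk (hM k).ne').1 (hgrowth (h * R))
  refine ⟨(B * W).toNNReal, fun x hx => iSup_le fun k => iSup₂_le fun ξ hξ =>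
    ENNReal.ofReal_le_ofReal ?_⟩
  have growth_le : k.factorial * (h * R) ^ k ≤ W * M k := by
    simpa only [Real.norm_of_nonneg (hM k).le] using (Real.le_norm_self _).trans (hW k)
  have derivative_le : ‖iteratedFDeriv ℝ k (fun ξ => g (x, ξ)) ξ‖ ≤ B * k.factorial * R ^ k :=
    (norm_iteratedFDeriv_prodMk_le (hg (x, ξ) ⟨hx, hξ⟩).contDiffAt).trans (hBR (x, ξ) ⟨hx, hξ⟩ k)
  rw [div_le_iff₀ (hM k)]
  calc h ^ k * ‖iteratedFDeriv ℝ k (fun ξ => g (x, ξ)) ξ‖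
      ≤ h ^ k * (B * k.factorial * R ^ k) := by gcongr
    _ = B * (k.factorial * (h * R) ^ k) := by ring
    _ ≤ B * (W * M k) := by gcongr
    _ = B * W * M k := by ring

/-- The continuity estimate of an ultradistribution of class `M` carried by `K`: a bound by the
`ultraSeminorm` on `K`, for test functions on the sphere that are encoded as smooth functions on
`E \ {0}` homogeneous of degree `0`. -/
def IsUltraBounded (M : ℕ → ℝ) (h : ℝ) (K : Set E) (C : ℝ≥0) (T : (E → ℝ) → ℝ) : Prop :=
  ∀ φ : E → ℝ, ContDiffOn ℝ (⊤ : ℕ∞) φ {0}ᶜ → (∀ c : ℝ, 0 < c → ∀ x, φ (c • x) = φ x) →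
    ENNReal.ofReal |T φ| ≤ C * ultraSeminorm M h K φ

end UltraSeminorm

section PoissonKernel

variable {E : Type*} [NormedAddCommGroup E] [InnerProductSpace ℝ E]

/-- The function `|x - ξ/|ξ||⁻ᵐ` of `ξ`: the Poisson kernel without its factor `1 - |x|²`,
extended from the unit sphere to be homogeneous of degree `0` in `ξ`. -/
noncomputable def directionKernel (m : ℕ) (x ξ : E) : ℝ :=
  (‖x - ‖ξ‖⁻¹ • ξ‖ ^ m)⁻¹

theorem directionKernel_smul (m : ℕ) (x ξ : E) {c : ℝ} (hc : 0 < c) :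
    directionKernel m x (c • ξ) = directionKernel m x ξ := by
  have : ‖c • ξ‖⁻¹ • c • ξ = ‖ξ‖⁻¹ • ξ := by
    rw [norm_smul, Real.norm_of_nonneg hc.le, smul_smul, mul_inv_rev, inv_mul_cancel_right₀ hc.ne']
  rw [directionKernel, directionKernel, this]

theorem contDiffAt_directionKernel (m : ℕ) {p : WithTop ℕ∞} {z : E × E} (hξ : z.2 ≠ 0)
    (hne : z.1 ≠ ‖z.2‖⁻¹ • z.2) :
    ContDiffAt ℝ p (fun z : E × E => directionKernel m z.1 z.2) z := by
  have direction : ContDiffAt ℝ p (fun z : E × E => ‖z.2‖⁻¹ • z.2) z :=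
    ((contDiffAt_snd.norm ℝ hξ).inv (norm_ne_zero_iff.2 hξ)).smul contDiffAt_snd
  have distance_ne : ‖z.1 - ‖z.2‖⁻¹ • z.2‖ ≠ 0 := norm_ne_zero_iff.2 (sub_ne_zero.2 hne)
  exact (((contDiffAt_fst.sub direction).norm ℝ (sub_ne_zero.2 hne)).pow m).inv
    (pow_ne_zero m distance_ne)

theorem contDiffAt_directionKernel_right (m : ℕ) {p : WithTop ℕ∞} {x ξ : E} (hx : ‖x‖ < 1)
    (hξ : ξ ≠ 0) : ContDiffAt ℝ p (directionKernel m x) ξ := by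
  have hne : x ≠ ‖ξ‖⁻¹ • ξ := by
    rintro rfl
    exact hx.ne (norm_smul_inv_norm hξ)
  exact (contDiffAt_directionKernel m (z := (x, ξ)) hξ hne).comp ξ
    (contDiffAt_const.prodMk contDiffAt_id)

theorem analyticOnNhd_directionKernel (m : ℕ) {X K : Set E} (hK : K ⊆ sphere 0 1)
    (hXK : Disjoint X K) :
    AnalyticOnNhd ℝ (fun z : E × E => directionKernel m z.1 z.2) (X ×ˢ K) := by
  rintro ⟨x, ξ⟩ ⟨hx, hξ⟩
  refine (contDiffAt_directionKernel m (ne_of_mem_sphere (hK hξ) one_ne_zero) ?_).analyticAt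
  simpa [mem_sphere_zero_iff_norm.1 (hK hξ)] using hXK.ne_of_mem hx hξ

/-- The Poisson kernel `c (1 - r²) / |rω - ξ|ᵐ` of the unit ball, with `c` the reciprocal of the
area of the sphere and `m` the dimension, extended to be homogeneous of degree `0` in `ξ`. -/
noncomputable def poissonKernelExt (c : ℝ) (m : ℕ) (r : ℝ) (ω : E) : E → ℝ := fun ξ =>
  c * (1 - r ^ 2) / ‖r • ω - ‖ξ‖⁻¹ • ξ‖ ^ m

theorem poissonKernelExt_eq_smul (c : ℝ) (m : ℕ) (r : ℝ) (ω : E) :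
    poissonKernelExt c m r ω = (c * (1 - r ^ 2)) • directionKernel m (r • ω) :=
  funext fun _ => div_eq_mul_inv _ _

theorem disjoint_Icc_smul_of_subset_sphere {K₁ K₂ : Set E} (hK₁ : K₁ ⊆ sphere 0 1)
    (hK₂ : K₂ ⊆ sphere 0 1) (hdisj : Disjoint K₁ K₂) : Disjoint (Icc (0 : ℝ) 1 • K₁) K₂ := by
  refine disjoint_left.2 ?_
  rintro _ ⟨r, hr, ω, hω, rfl⟩ hrω
  have hr1 : r = 1 := by
    simpa [norm_smul, mem_sphere_zero_iff_norm.1 (hK₁ hω), abs_of_nonneg hr.1] using hK₂ hrω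
  exact disjoint_left.1 hdisj hω (by simpa [hr1] using hrω)

variable {M : ℕ → ℝ} {h : ℝ} {C : ℝ≥0} {T : (E → ℝ) → ℝ}

theorem exists_abs_apply_smul_directionKernel_le (hM : ∀ p, 0 < M p)
    (hgrowth : ∀ L : ℝ, (fun k : ℕ => k.factorial * L ^ k) =O[atTop] M) (hh : 0 ≤ h) {X K : Set E}
    (hX : IsCompact X) (hK : IsCompact K) (hKsph : K ⊆ sphere 0 1) (hXK : Disjoint X K)
    (hT : IsUltraBounded M h K C T) (m : ℕ) :
    ∃ B : ℝ≥0, ∀ x ∈ X, ‖x‖ < 1 → ∀ a : ℝ, |T (a • directionKernel m x)| ≤ B * |a| := by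
  obtain ⟨B, hB⟩ := exists_ultraSeminorm_le_of_analyticOnNhd hX hK
    (analyticOnNhd_directionKernel m hKsph hXK) hM hgrowth hh
  refine ⟨C * B, fun x hx hx1 a => ?_⟩
  have smooth {ξ : E} (hξ : ξ ≠ 0) : ContDiffAt ℝ (⊤ : ℕ∞) (directionKernel m x) ξ :=
    contDiffAt_directionKernel_right m hx1 hξ
  have apply_le :
      ENNReal.ofReal |T (a • directionKernel m x)| ≤ ENNReal.ofReal (C * B * |a|) := calc
    ENNReal.ofReal |T (a • directionKernel m x)|
      ≤ C * ultraSeminorm M h K (a • directionKernel m x) :=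
        hT _ (fun ξ hξ => (contDiffAt_const.smul (smooth hξ)).contDiffWithinAt)
          fun c hc ξ => by simp only [Pi.smul_apply, directionKernel_smul m x ξ hc]
    _ = C * (‖a‖ₑ * ultraSeminorm M h K (directionKernel m x)) := by
        rw [ultraSeminorm_const_smul fun ξ hξ => smooth (ne_of_mem_sphere (hKsph hξ) one_ne_zero)]
    _ ≤ C * (‖a‖ₑ * B) := by gcongr; exact hB x hx
    _ = ENNReal.ofReal (C * B * |a|) := by
        rw [ENNReal.ofReal_mul (by positivity), ENNReal.ofReal_mul C.coe_nonneg,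
          ENNReal.ofReal_coe_nnreal, ENNReal.ofReal_coe_nnreal, ← Real.enorm_eq_ofReal_abs]
        ring
  exact (ENNReal.ofReal_le_ofReal_iff (by positivity)).1 apply_le

theorem exists_abs_apply_poissonKernelExt_le (hM : ∀ p, 0 < M p)
    (hgrowth : ∀ L : ℝ, (fun k : ℕ => k.factorial * L ^ k) =O[atTop] M) (hh : 0 ≤ h) {K₁ K₂ : Set E}
    (hK₁ : IsCompact K₁) (hK₂ : IsCompact K₂) (hK₁sph : K₁ ⊆ sphere 0 1)
    (hK₂sph : K₂ ⊆ sphere 0 1) (hdisj : Disjoint K₁ K₂) (hT : IsUltraBounded M h K₂ C T)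
    (c : ℝ) (m : ℕ) :
    ∃ A : ℝ, 0 < A ∧ ∀ ω ∈ K₁, ∀ r : ℝ, 0 ≤ r → r < 1 →
      |T (poissonKernelExt c m r ω)| ≤ A * (1 - r) := by
  obtain ⟨B, hB⟩ := exists_abs_apply_smul_directionKernel_le hM hgrowth hh
    (isCompact_Icc.smul_set hK₁) hK₂ hK₂sph
    (disjoint_Icc_smul_of_subset_sphere hK₁sph hK₂sph hdisj) hT m
  refine ⟨B * (2 * |c|) + 1, by positivity, fun ω hω r hr0 hr1 => ?_⟩
  have norm_lt : ‖r • ω‖ < 1 := by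
    rwa [norm_smul, mem_sphere_zero_iff_norm.1 (hK₁sph hω), mul_one, Real.norm_of_nonneg hr0]
  have one_sub_sq_nonneg : 0 ≤ 1 - r ^ 2 := by nlinarith
  have factor_le : |c * (1 - r ^ 2)| ≤ 2 * |c| * (1 - r) := by
    rw [abs_mul, abs_of_nonneg one_sub_sq_nonneg, mul_comm 2, mul_assoc]
    gcongr
    nlinarith
  rw [poissonKernelExt_eq_smul]
  calc |T ((c * (1 - r ^ 2)) • directionKernel m (r • ω))|
      ≤ B * |c * (1 - r ^ 2)| := hB _ (smul_mem_smul ⟨hr0, hr1.le⟩ hω) norm_lt _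
    _ ≤ B * (2 * |c| * (1 - r)) := by gcongr
    _ ≤ (B * (2 * |c|) + 1) * (1 - r) := by linarith

theorem tendstoUniformlyOn_zero_of_abs_le {ι α : Type*} {l : Filter ι} {F : ι → α → ℝ}
    {u : ι → ℝ} {s : Set α} (hu : Tendsto u l (𝓝 0)) (hF : ∀ᶠ i in l, ∀ x ∈ s, |F i x| ≤ u i) :
    TendstoUniformlyOn F (fun _ => 0) l s := by
  refine Metric.tendstoUniformlyOn_iff.2 fun ε hε => ?_
  filter_upwards [hF, hu.eventually_lt_const hε] with i hi hiε x hx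
  rw [dist_zero_left, Real.norm_eq_abs]
  exact (hi x hx).trans_lt hiε

theorem stmt17_general (hM : ∀ p, 0 < M p)
    (hgrowth : ∀ L : ℝ, (fun k : ℕ => k.factorial * L ^ k) =O[atTop] M) (hh : 0 ≤ h) {K₁ K₂ : Set E}
    (hK₁ : IsCompact K₁) (hK₂ : IsCompact K₂) (hK₁sph : K₁ ⊆ sphere 0 1)
    (hK₂sph : K₂ ⊆ sphere 0 1) (hdisj : Disjoint K₁ K₂) (hT : IsUltraBounded M h K₂ C T)
    (c : ℝ) (m : ℕ) :
    (∃ A : ℝ, 0 < A ∧ ∀ ω ∈ K₁, ∀ r : ℝ, 0 ≤ r → r < 1 →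
      |T (poissonKernelExt c m r ω)| ≤ A * (1 - r)) ∧
    TendstoUniformlyOn (fun r ω => T (poissonKernelExt c m r ω)) (fun _ => 0) (𝓝[<] 1) K₁ := by
  obtain ⟨A, hA, hbound⟩ :=
    exists_abs_apply_poissonKernelExt_le hM hgrowth hh hK₁ hK₂ hK₁sph hK₂sph hdisj hT c m
  have one_sub_tendsto : Tendsto (fun r : ℝ => A * (1 - r)) (𝓝[<] 1) (𝓝 0) :=
    tendsto_nhdsWithin_of_tendsto_nhds (Continuous.tendsto' (by fun_prop) 1 0 (by simp))
  refine ⟨⟨A, hA, hbound⟩, tendstoUniformlyOn_zero_of_abs_le one_sub_tendsto ?_⟩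
  filter_upwards [Ico_mem_nhdsLT zero_lt_one] with r hr ω hω
  exact hbound ω hω r hr.1 hr.2

end PoissonKernel

end PoissonTransform

/-- Let `f` be a non-quasianalytic ultradistribution (of class `M_p`, a
weight sequence satisfying (M.1), (M.2)' and the non-quasianalyticity condition (M.3)')
on `S^{n-1}`, realized as a linear functional on test functions identified with their
degree-0 homogeneous extensions.  Assume `K₁ ⊆ S^{n-1}` is closed and disjoint from
`supp f`, i.e. there is a closed `K₂ ⊆ S^{n-1}` disjoint from `K₁` carrying `f`:
`|⟨f,φ⟩| ≤ C₁ · sup_k sup_{ξ∈K₂} h^k‖D^k φ(ξ)‖/M_k` for every test function `φ`.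
Then the Poisson transform `P[f](rω) = ⟨f, P(rω,·)⟩` tends to `0` as `r → 1⁻` uniformly
for `ω ∈ K₁`, and moreover `|P[f](rω)| ≤ C(1−r)` for `ω ∈ K₁` and `1/2 ≤ r < 1`. -/
theorem stmt17 (n : ℕ) (hn : 2 ≤ n)
    (M : ℕ → ℝ) (hMpos : ∀ p, 0 < M p) (hM0 : M 0 = 1)
    (hM1 : ∀ p : ℕ, 1 ≤ p → (M p) ^ 2 ≤ M (p - 1) * M (p + 1))
    (A H : ℝ) (hA : 1 < A) (hH : 1 < H)
    (hM2 : ∀ p : ℕ, M (p + 1) ≤ A * H ^ p * M p)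
    (hM3 : Summable fun p : ℕ => M p / M (p + 1))
    (f : (EuclideanSpace ℝ (Fin n) → ℝ) →ₗ[ℝ] ℝ)
    (K₁ K₂ : Set (EuclideanSpace ℝ (Fin n)))
    (hK₁closed : IsClosed K₁) (hK₂closed : IsClosed K₂)
    (hK₁sph : K₁ ⊆ Metric.sphere (0 : EuclideanSpace ℝ (Fin n)) 1)
    (hK₂sph : K₂ ⊆ Metric.sphere (0 : EuclideanSpace ℝ (Fin n)) 1)
    (hdisj : Disjoint K₁ K₂)
    (C₁ h : ℝ) (hC₁ : 0 < C₁) (hh : 0 < h)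
    (hcont : ∀ φ : EuclideanSpace ℝ (Fin n) → ℝ,
      ContDiffOn ℝ (⊤ : ℕ∞) φ {(0 : EuclideanSpace ℝ (Fin n))}ᶜ →
      (∀ c : ℝ, 0 < c → ∀ x, φ (c • x) = φ x) →
      ENNReal.ofReal |f φ| ≤ ENNReal.ofReal C₁ *
        ⨆ (k : ℕ), ⨆ ξ ∈ K₂, ENNReal.ofReal (h ^ k * ‖iteratedFDeriv ℝ k φ ξ‖ / M k))
    (S : ℝ) (hS : 0 < S) :
    (∃ C : ℝ, 0 < C ∧ ∀ ω ∈ K₁, ∀ r : ℝ, 1 / 2 ≤ r → r < 1 →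
      |f (poissonExt n S r ω)| ≤ C * (1 - r)) ∧
    TendstoUniformlyOn (fun (r : ℝ) (ω : EuclideanSpace ℝ (Fin n)) => f (poissonExt n S r ω))
      (fun _ => 0) (nhdsWithin 1 (Set.Iio 1)) K₁ := by
  obtain ⟨⟨C, hC, hbound⟩, hlim⟩ := stmt17_general hMpos
    (fun L => (isLittleO_factorial_mul_pow_of_summable hMpos hM1 hM3 L).isBigO) hh.le
    ((isCompact_sphere _ _).of_isClosed_subset hK₁closed hK₁sph)
    ((isCompact_sphere _ _).of_isClosed_subset hK₂closed hK₂sph)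
    hK₁sph hK₂sph hdisj (C := C₁.toNNReal) (T := f) hcont S⁻¹ n
  exact ⟨⟨C, hC, fun ω hω r hr => hbound ω hω r (by linarith)⟩, hlim⟩
end
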